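/- arXiv:2604.05146 — 4 statements merged into one kernel-verified Lean document; each statement's English description precedes it below -/
import Mathlib

section
/- For every real number ζ > 41/2, there exists a constant c ∈ ℕ (depending only on ζ) such that every finite simple bipartite graph G with maximum degree Δ(G) ≥ c and |V(G)| ≥ ζ·Δ(G) satisfies χ_e(G) ≤ ⌈Δ(G)/2⌉ + 1. -/
/-- A proper coloring of `G` with `k` colors whose color classes pairwise differ
in size by at most one. -/
def SimpleGraph.IsEquitableColoring {V : Type*} [Fintype V] [DecidableEq V]
    (G : SimpleGraph V) (k : ℕ) (C : V → Fin k) : Prop :=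
  (∀ u v, G.Adj u v → C u ≠ C v) ∧
    ∀ i j : Fin k,
      (Finset.univ.filter fun v => C v = i).card ≤
        (Finset.univ.filter fun v => C v = j).card + 1

/-- The equitable chromatic number: the least `k` admitting an equitable `k`-coloring. -/
noncomputable def SimpleGraph.equitableChromaticNumber {V : Type*} [Fintype V] [DecidableEq V]
    (G : SimpleGraph V) : ℕ :=
  sInf {k | ∃ C : V → Fin k, G.IsEquitableColoring k C}

/-!
Prescribe the class sizes first. Let `A`, `B` be the parts of the bipartition. Fill classes with
vertices of `B` alone until no further class fits, and spread the few vertices of `B` left over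
thinly among `m` of the other classes, at most `q` in each. Only these `m` classes constrain the
vertices of `A`: each forbids at most `q * Δ` of them, and together they need at most `m * S`
vertices, where `S` bounds the class sizes. So Hall's condition holds once `q * Δ + m * S < #A`,
where `q` is about `S / m`.

For an equitable `k`-coloring with `k ≥ ε * Δ`, the bound `S` is about `|V| / k`, hence
`(S / m) * Δ` is at most about `|V| / (ε * m)`, while the rounding of `S / m` costs another `Δ`.
Since `#A ≥ |V| / 2` and `|V| ≥ ζ * Δ` with `ζ > 2`, a large fixed `m` works as soon as `Δ` is
large in terms of `m`.
-/

open Finset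

section PrescribedFibers

variable {W ι : Type*} [Fintype W] [Fintype ι] {a : ι → ℕ} {N : ι → Finset W} {M : Finset ι}

theorem card_le_card_biUnion_compl [DecidableEq W]
    (hsum : ∑ i, a i = Fintype.card W) (hfree : ∀ i ∉ M, a i = 0 ∨ N i = ∅)
    (hroom : ∀ i ∈ M, #(N i) + ∑ j ∈ M, a j ≤ Fintype.card W) (T : Finset (Σ i, Fin (a i))) :
    #T ≤ #(T.biUnion fun x => (N x.1)ᶜ) := by
  rcases T.eq_empty_or_nonempty with rfl | ⟨x₀, hx₀⟩
  · simp
  suffices hx : ∃ x ∈ T, #T ≤ #(N x.1)ᶜ by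
    obtain ⟨x, hxT, hle⟩ := hx
    exact hle.trans (card_le_card (subset_biUnion_of_mem (fun x => (N x.1)ᶜ) hxT))
  by_cases hTM : ∀ x ∈ T, x.1 ∈ M
  · have hT : T ⊆ M.sigma fun i => (univ : Finset (Fin (a i))) := fun x hx => by simp [hTM x hx]
    have hcard : #T ≤ ∑ j ∈ M, a j := by simpa [card_sigma] using card_le_card hT
    refine ⟨x₀, hx₀, ?_⟩
    rw [card_compl]
    have := hroom x₀.1 (hTM x₀ hx₀)
    omega
  · push Not at hTM
    obtain ⟨x, hxT, hxM⟩ := hTM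
    have hN : N x.1 = ∅ := (hfree x.1 hxM).resolve_left x.2.pos.ne'
    exact ⟨x, hxT, by simpa [hN, hsum] using card_le_univ T⟩

theorem exists_map_notMem_card_fiber_eq [DecidableEq ι]
    (hsum : ∑ i, a i = Fintype.card W) (hfree : ∀ i ∉ M, a i = 0 ∨ N i = ∅)
    (hroom : ∀ i ∈ M, #(N i) + ∑ j ∈ M, a j ≤ Fintype.card W) :
    ∃ c : W → ι, (∀ w, w ∉ N (c w)) ∧ ∀ i, #{w | c w = i} = a i := by
  classical
  obtain ⟨f, hinj, hf⟩ := (all_card_le_biUnion_card_iff_exists_injective _).1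
    (card_le_card_biUnion_compl hsum hfree hroom)
  have hbij : f.Bijective :=
    (Fintype.bijective_iff_injective_and_card f).2 ⟨hinj, by simp [hsum]⟩
  let e : (Σ i, Fin (a i)) ≃ W := Equiv.ofBijective f hbij
  refine ⟨fun w => (e.symm w).1, fun w => ?_, fun i => ?_⟩
  · simpa [e, Equiv.ofBijective_apply_symm_apply] using hf (e.symm w)
  · calc #{w | (e.symm w).1 = i} = #{x : Σ i, Fin (a i) | x.1 = i} :=
          card_equiv e.symm (by simp)
      _ = #(({i} : Finset ι).sigma fun j => (univ : Finset (Fin (a j)))) := by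
          congr 1
          ext
          simp
      _ = a i := by simp

end PrescribedFibers

theorem exists_sum_eq_of_le_card_mul {ι : Type*} [Fintype ι] {M : Finset ι} {q r : ℕ}
    (hr : r ≤ #M * q) :
    ∃ f : ι → ℕ, ∑ i, f i = r ∧ (∀ i, f i ≤ q) ∧ ∀ i ∉ M, f i = 0 := by
  classical
  obtain ⟨f, hf, rfl⟩ := Finsupp.exists_le_degree_eq (Finsupp.indicator M fun _ _ => q) r
    (by simpa [Finsupp.degree_eq_sum, Finsupp.indicator_apply] using hr)
  refine ⟨f, by rw [Finsupp.degree_eq_sum], fun i => (hf i).trans ?_, fun i hi => ?_⟩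
  · rw [Finsupp.indicator_apply]
    split_ifs <;> simp
  · simpa [Finsupp.indicator_apply, hi] using hf i

theorem exists_le_sum_eq_of_add_mul_lt_sum {ι : Type*} [Fintype ι] {t : ι → ℕ} {S m q b : ℕ}
    (ht : ∀ i, t i ≤ S) (hb : b + m * S < ∑ i, t i) (hmq : S ≤ m * q) :
    ∃ β : ι → ℕ, β ≤ t ∧ ∑ i, β i = b ∧
      ∃ M : Finset ι, #M = m ∧ (∀ i ∈ M, β i ≤ q) ∧ ∀ i ∉ M, β i = t i ∨ β i = 0 := by
  classical
  obtain ⟨F, hF, hFmax⟩ := exists_maximal (s := {F : Finset ι | ∑ i ∈ F, t i ≤ b}) ⟨∅, by simp⟩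
  simp only [mem_filter, mem_univ, true_and] at hF hFmax
  have hlt (j : ι) (hj : j ∉ F) : b < t j + ∑ i ∈ F, t i := by
    by_contra! hle
    exact hj (hFmax (by rwa [sum_insert hj]) (subset_insert j F) (mem_insert_self j F))
  have hsplit : ∑ i ∈ F, t i + ∑ i ∈ Fᶜ, t i = ∑ i, t i := sum_add_sum_compl F t
  have hm : m < #Fᶜ := by
    have : ∑ i ∈ Fᶜ, t i ≤ #Fᶜ * S := sum_le_card_nsmul _ _ _ fun i _ => ht i
    exact lt_of_mul_lt_mul_right (a := S) (by omega) S.zero_le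
  obtain ⟨M, hMF, rfl⟩ := exists_subset_card_eq hm.le
  obtain ⟨j, hj⟩ : Fᶜ.Nonempty := card_pos.1 (by omega)
  have hr : b - ∑ i ∈ F, t i ≤ #M * q := by
    have := hlt j (mem_compl.1 hj)
    have := ht j
    omega
  obtain ⟨f, hfsum, hfq, hfM⟩ := exists_sum_eq_of_le_card_mul hr
  have hfF (i : ι) (hi : i ∈ F) : f i = 0 := hfM i fun h => mem_compl.1 (hMF h) hi
  refine ⟨F.piecewise t f, fun i => ?_, ?_, M, rfl, fun i hi => ?_, fun i hi => ?_⟩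
  · by_cases hi : i ∈ F
    · simp [hi]
    · have : f i ≤ ∑ i, f i := single_le_sum_of_canonicallyOrdered (mem_univ i)
      have := hlt i hi
      simp only [hi, not_false_eq_true, piecewise_eq_of_notMem]
      omega
  · have hfcompl : ∑ i ∈ Fᶜ, f i = ∑ i, f i :=
      sum_subset (subset_univ _) fun i _ hi => hfF i (by simpa using hi)
    rw [sum_piecewise, univ_inter, ← compl_eq_univ_sdiff, hfcompl, hfsum]
    omega
  · rw [piecewise_eq_of_notMem _ _ _ (mem_compl.1 (hMF hi))]
    exact hfq i
  · by_cases hiF : i ∈ F <;> simp [hiF, hfM i hi]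

section Bipartition

variable {V ι : Type*} [Fintype V] [DecidableEq V] [DecidableEq ι] {G : SimpleGraph V}
  {A : Finset V}

theorem exists_coloring_card_fiber_eq_add (hA : G.IsIndepSet A) (hA' : G.IsIndepSet ↑Aᶜ)
    (cA : {v // v ∈ A} → ι) (cB : {v // v ∉ A} → ι)
    (h : ∀ (a : {v // v ∈ A}) (b : {v // v ∉ A}), G.Adj b a → cA a ≠ cB b) :
    ∃ C : G.Coloring ι, ∀ i, #{v | C v = i} = #{a | cA a = i} + #{b | cB b = i} := by
  let c (v : V) : ι := if hv : v ∈ A then cA ⟨v, hv⟩ else cB ⟨v, hv⟩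
  have hcA (a : {v // v ∈ A}) : c a = cA a := by simp [c]
  have hcB (b : {v // v ∉ A}) : c b = cB b := by simp [c, b.2]
  have hc (u v : V) (huv : G.Adj u v) : c u ≠ c v := by
    by_cases hu : u ∈ A <;> by_cases hv : v ∈ A
    · exact absurd huv (hA hu hv huv.ne)
    · simpa only [hcA ⟨u, hu⟩, hcB ⟨v, hv⟩] using h ⟨u, hu⟩ ⟨v, hv⟩ huv.symm
    · simpa only [hcA ⟨v, hv⟩, hcB ⟨u, hu⟩] using (h ⟨v, hv⟩ ⟨u, hu⟩ huv).symm
    · exact absurd huv (hA' (by simpa using hu) (by simpa using hv) huv.ne)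
  refine ⟨SimpleGraph.Coloring.mk c (hc _ _), fun i => ?_⟩
  change #{v | c v = i} = _
  simp only [card_filter, ← hcA, ← hcB]
  convert (Fintype.sum_subtype_add_sum_subtype (· ∈ A) fun v => if c v = i then 1 else 0).symm

variable [Fintype ι] [DecidableRel G.Adj]

theorem exists_coloring_card_fiber_eq_of_split (hA : G.IsIndepSet A) (hA' : G.IsIndepSet ↑Aᶜ)
    {α β : ι → ℕ} {M : Finset ι} (hα : ∑ i, α i = #A) (hβ : ∑ i, β i = #Aᶜ)
    (hpure : ∀ i ∉ M, α i = 0 ∨ β i = 0)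
    (hmixed : ∀ i ∈ M, β i * G.maxDegree + ∑ j ∈ M, α j ≤ #A) :
    ∃ C : G.Coloring ι, ∀ i, #{v | C v = i} = α i + β i := by
  obtain ⟨cB, -, hcB⟩ := exists_map_notMem_card_fiber_eq (W := {v // v ∉ A}) (a := β)
    (N := fun _ => ∅) (M := ∅) (by simpa [Fintype.card_subtype_compl, card_compl] using hβ)
    (by simp) (by simp)
  let N (i : ι) : Finset {v // v ∈ A} :=
    ({b | cB b = i} : Finset {v // v ∉ A}).biUnion fun b => (G.neighborFinset b).subtype (· ∈ A)
  have hN (i : ι) : #(N i) ≤ β i * G.maxDegree := by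
    rw [← hcB i]
    refine card_biUnion_le_card_mul _ _ _ fun b _ => ?_
    rw [card_subtype]
    exact (card_filter_le _ _).trans (G.degree_le_maxDegree b)
  obtain ⟨cA, hcA_notMem, hcA⟩ := exists_map_notMem_card_fiber_eq (a := α) (N := N) (M := M)
    (by simpa using hα)
    (fun i hi => (hpure i hi).imp_right fun h => card_eq_zero.1 (by simpa [h] using hN i))
    (fun i hi => by simpa using (Nat.add_le_add_right (hN i) _).trans (hmixed i hi))
  have hne (a : {v // v ∈ A}) (b : {v // v ∉ A}) (hba : G.Adj b a) : cA a ≠ cB b :=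
    fun heq => hcA_notMem a <| mem_biUnion.2 ⟨b, by simp [heq], by simpa using hba⟩
  obtain ⟨C, hC⟩ := exists_coloring_card_fiber_eq_add hA hA' cA cB hne
  exact ⟨C, fun i => by rw [hC, hcA, hcB]⟩

theorem exists_coloring_card_fiber_eq (hA : G.IsIndepSet A) (hA' : G.IsIndepSet ↑Aᶜ)
    {t : ι → ℕ} {S m q : ℕ} (ht : ∀ i, t i ≤ S) (hsum : ∑ i, t i = Fintype.card V)
    (hmq : S ≤ m * q) (hroom : q * G.maxDegree + m * S < #A) :
    ∃ C : G.Coloring ι, ∀ i, #{v | C v = i} = t i := by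
  have hcard : #A + #Aᶜ = Fintype.card V := card_add_card_compl A
  obtain ⟨β, hβt, hβ, M, hM, hMq, hpure⟩ :=
    exists_le_sum_eq_of_add_mul_lt_sum (b := #Aᶜ) ht (by omega) hmq
  have hα : ∑ i, (t i - β i) = #A := by
    rw [sum_tsub_distrib _ fun i _ => hβt i, hsum, hβ]
    omega
  have hmixed (i : ι) (hi : i ∈ M) :
      β i * G.maxDegree + ∑ j ∈ M, (t j - β j) ≤ #A := by
    calc β i * G.maxDegree + ∑ j ∈ M, (t j - β j)
        ≤ q * G.maxDegree + #M * S := by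
          gcongr
          · exact hMq i hi
          · exact sum_le_card_nsmul _ _ _ fun j _ => (Nat.sub_le _ _).trans (ht j)
      _ ≤ #A := by rw [hM]; exact hroom.le
  obtain ⟨C, hC⟩ := exists_coloring_card_fiber_eq_of_split hA hA' hα hβ
    (fun i hi => (hpure i hi).imp_left fun h => by simp [h]) hmixed
  exact ⟨C, fun i => (hC i).trans (Nat.sub_add_cancel (hβt i))⟩

end Bipartition

theorem exists_fin_sum_eq_of_pos {k : ℕ} (hk : 0 < k) (n : ℕ) :
    ∃ t : Fin k → ℕ, ∑ i, t i = n ∧ ∀ i, n / k ≤ t i ∧ t i ≤ n / k + 1 := by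
  refine ⟨fun i => n / k + if (i : ℕ) < n % k then 1 else 0, ?_, fun i => ?_⟩
  · rw [sum_add_distrib, sum_boole, Fin.card_filter_val_lt, min_eq_right (Nat.mod_lt n hk).le]
    simpa using Nat.div_add_mod n k
  · dsimp only
    split_ifs <;> omega

theorem isBipartite_of_union_eq_univ {V : Type*} {G : SimpleGraph V} {A B : Set V}
    (hAB : A ∪ B = Set.univ) (hdisj : Disjoint A B) (hA : ∀ u ∈ A, ∀ v ∈ A, ¬ G.Adj u v)
    (hB : ∀ u ∈ B, ∀ v ∈ B, ¬ G.Adj u v) : G.IsBipartite := by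
  refine SimpleGraph.IsBipartiteWith.isBipartite (s := A) (t := B) ⟨hdisj, fun u v huv => ?_⟩
  have hu : u ∈ A ∪ B := by simp [hAB]
  have hv : v ∈ A ∪ B := by simp [hAB]
  grind

theorem exists_isIndepSet_compl_of_isBipartite {V : Type*} [Fintype V] [DecidableEq V]
    {G : SimpleGraph V} (hG : G.IsBipartite) :
    ∃ A : Finset V, G.IsIndepSet A ∧ G.IsIndepSet ↑Aᶜ ∧ Fintype.card V ≤ 2 * #A := by
  obtain ⟨C⟩ := hG
  let A : Finset V := {v | C v = 0}
  have hA : G.IsIndepSet A := by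
    simpa [A, SimpleGraph.Coloring.colorClass] using C.isIndepSet_colorClass 0
  have hA' : G.IsIndepSet ↑Aᶜ := by
    intro u hu v hv _ huv
    have hu0 : C u ≠ 0 := by simpa [A] using hu
    have hv0 : C v ≠ 0 := by simpa [A] using hv
    have := C.valid huv
    omega
  rcases le_total #Aᶜ #A with h | h
  · exact ⟨A, hA, hA', by rw [← card_add_card_compl A]; omega⟩
  · exact ⟨Aᶜ, hA', by rwa [compl_compl], by rw [← card_add_card_compl A]; omega⟩

theorem exists_isEquitableColoring_of_isBipartite {V : Type*} [Fintype V] [DecidableEq V]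
    {G : SimpleGraph V} [DecidableRel G.Adj] (hG : G.IsBipartite) {k m q : ℕ} (hk : 0 < k)
    (hmq : Fintype.card V / k + 1 ≤ m * q)
    (hroom : 2 * (q * G.maxDegree + m * (Fintype.card V / k + 1)) < Fintype.card V) :
    ∃ C : V → Fin k, G.IsEquitableColoring k C := by
  obtain ⟨A, hA, hA', hcard⟩ := exists_isIndepSet_compl_of_isBipartite hG
  obtain ⟨t, hsum, ht⟩ := exists_fin_sum_eq_of_pos hk (Fintype.card V)
  obtain ⟨C, hC⟩ :=
    exists_coloring_card_fiber_eq hA hA' (fun i => (ht i).2) hsum hmq (by omega)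
  refine ⟨C, fun u v huv => C.valid huv, fun i j => ?_⟩
  rw [hC, hC]
  exact (ht i).2.trans (Nat.add_le_add_right (ht j).1 1)

theorem natCast_div_add_one_mul_le {ε : ℝ} (hε : 0 < ε) {D n k : ℕ} (hDn : D ≤ n)
    (hk : ε * D ≤ k) : ((n / k + 1 : ℕ) : ℝ) * D ≤ (1 / ε + 1) * n := by
  have hdiv : ((n / k : ℕ) : ℝ) * k ≤ n := by exact_mod_cast Nat.div_mul_le_self n k
  have hD : (D : ℝ) ≤ n := by exact_mod_cast hDn
  calc ((n / k + 1 : ℕ) : ℝ) * D = 1 / ε * ((n / k : ℕ) * (ε * D)) + D := by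
        push_cast
        field_simp
    _ ≤ 1 / ε * ((n / k : ℕ) * k) + n := by gcongr
    _ ≤ 1 / ε * n + n := by gcongr
    _ = (1 / ε + 1) * n := by ring

theorem two_mul_add_lt {δ L : ℝ} {m D n S : ℕ} (hm_pos : 0 < m) (hD_pos : 0 < D) (hn_pos : 0 < n)
    (hm : 4 * L < m * δ) (hD : 4 * L * m ≤ D * δ) (hDn : 2 * (D : ℝ) ≤ (1 - δ) * n)
    (hSD : (S : ℝ) * D ≤ L * n) : 2 * ((S / m + 1) * D + m * S) < n := by
  have hforbidden : 4 * (((S / m : ℕ) : ℝ) * D) < δ * n := by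
    have hdiv : ((S / m : ℕ) : ℝ) * m ≤ S := by exact_mod_cast Nat.div_mul_le_self S m
    refine lt_of_mul_lt_mul_right ?_ m.cast_nonneg
    calc 4 * (((S / m : ℕ) : ℝ) * D) * m = 4 * ((S / m : ℕ) * m * D) := by ring
      _ ≤ 4 * (S * D) := by gcongr
      _ ≤ 4 * (L * n) := by gcongr
      _ = 4 * L * n := by ring
      _ < m * δ * n := by gcongr
      _ = δ * n * m := by ring
  have hmixed : 4 * ((m : ℝ) * S) ≤ δ * n := by
    refine le_of_mul_le_mul_right ?_ (Nat.cast_pos.2 hD_pos)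
    calc 4 * ((m : ℝ) * S) * D = 4 * m * (S * D) := by ring
      _ ≤ 4 * m * (L * n) := by gcongr
      _ = 4 * L * m * n := by ring
      _ ≤ D * δ * n := by gcongr
      _ = δ * n * D := by ring
  have : 2 * ((((S / m : ℕ) : ℝ) + 1) * D + m * S) < n := by linarith
  exact_mod_cast this

theorem exists_forall_two_mul_add_lt {ζ ε : ℝ} (hζ : 2 < ζ) (hε : 0 < ε) :
    ∃ m c : ℕ, 0 < m ∧ 0 < c ∧ ∀ D n k : ℕ, c ≤ D → ζ * D ≤ n → ε * D ≤ k →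
      2 * (((n / k + 1) / m + 1) * D + m * (n / k + 1)) < n := by
  let L : ℝ := 1 / ε + 1
  let δ : ℝ := 1 - 2 / ζ
  have : 0 < L := by positivity
  have hδ : 0 < δ := sub_pos.2 ((div_lt_one (by linarith)).2 hζ)
  obtain ⟨m, hm⟩ := exists_nat_gt (4 * L / δ)
  have hm_pos : 0 < m := Nat.cast_pos.1 (lt_trans (by positivity) hm)
  obtain ⟨c, hc⟩ := exists_nat_gt (4 * L * m / δ)
  have hc_pos : 0 < c := Nat.cast_pos.1 (lt_trans (by positivity) hc)
  refine ⟨m, c, hm_pos, hc_pos, fun D n k hcD hn hk => ?_⟩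
  have hD_pos : 0 < D := hc_pos.trans_le hcD
  have hDn : 2 * (D : ℝ) ≤ (1 - δ) * n := by
    calc 2 * (D : ℝ) = 2 / ζ * (ζ * D) := by field_simp
      _ ≤ 2 / ζ * n := by gcongr
      _ = (1 - δ) * n := by ring
  have hD_le : D ≤ n := by
    have : (D : ℝ) ≤ n := by nlinarith
    exact_mod_cast this
  have hcD' : 4 * L * m ≤ D * δ := by
    rw [← div_le_iff₀ hδ]
    exact hc.le.trans (Nat.cast_le.2 hcD)
  exact two_mul_add_lt hm_pos hD_pos (hD_pos.trans_le hD_le) ((div_lt_iff₀ hδ).1 hm) hcD' hDn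
    (natCast_div_add_one_mul_le hε hD_le hk)

theorem one_half_mul_natCast_le (D : ℕ) : (1 / 2 : ℝ) * D ≤ ((D + 1) / 2 + 1 : ℕ) := by
  have : D ≤ 2 * ((D + 1) / 2 + 1) := by omega
  have : (D : ℝ) ≤ 2 * ((D + 1) / 2 + 1 : ℕ) := by exact_mod_cast this
  linarith

theorem equitable_chromatic_bound_bipartite_general {ζ ε : ℝ} (hζ : 2 < ζ) (hε : 0 < ε) :
    ∃ c : ℕ, ∀ (V : Type*) [Fintype V] [DecidableEq V] (G : SimpleGraph V) [DecidableRel G.Adj],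
      G.IsBipartite → c ≤ G.maxDegree → ζ * (G.maxDegree : ℝ) ≤ (Fintype.card V : ℝ) →
      ∀ k : ℕ, ε * (G.maxDegree : ℝ) ≤ k → ∃ C : V → Fin k, G.IsEquitableColoring k C := by
  obtain ⟨m, c, hm, hc, hroom⟩ := exists_forall_two_mul_add_lt hζ hε
  refine ⟨c, fun V _ _ G _ hG hD hn k hk => ?_⟩
  have hk_pos : 0 < k := by
    have hD_pos : (0 : ℝ) < G.maxDegree := by exact_mod_cast hc.trans_le hD
    exact_mod_cast (mul_pos hε hD_pos).trans_le hk
  exact exists_isEquitableColoring_of_isBipartite hG hk_pos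
    (Nat.lt_mul_div_succ _ hm).le (hroom _ _ k hD hn hk)

theorem equitable_chromatic_bound_bipartite (ζ : ℝ) (hζ : ζ > 41 / 2) :
    ∃ c : ℕ, ∀ (V : Type) [Fintype V] [DecidableEq V] (G : SimpleGraph V)
      [DecidableRel G.Adj],
      (∃ A B : Set V, A ∪ B = Set.univ ∧ Disjoint A B ∧
        (∀ u ∈ A, ∀ v ∈ A, ¬ G.Adj u v) ∧ (∀ u ∈ B, ∀ v ∈ B, ¬ G.Adj u v)) →
      c ≤ G.maxDegree →
      ζ * (G.maxDegree : ℝ) ≤ (Fintype.card V : ℝ) →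
      G.equitableChromaticNumber ≤ (G.maxDegree + 1) / 2 + 1 := by
  obtain ⟨c, hc⟩ := equitable_chromatic_bound_bipartite_general (ζ := ζ) (by linarith) one_half_pos
  refine ⟨c, fun V _ _ G _ ⟨A, B, hAB, hdisj, hA, hB⟩ hD hn => Nat.sInf_le ?_⟩
  exact hc V G (isBipartite_of_union_eq_univ hAB hdisj hA hB) hD hn _ (one_half_mul_natCast_le _)
end

section
/- Let G be a finite simple bipartite graph with bipartition (A, B), where 𝔞 := |A| ≤ |B| =: 𝔟, maximum degree Δ ≥ 2, and let k := ⌈Δ/2⌉ + 1. Suppose |V(G)| = kq + r with q ≥ 1 and 0 ≤ r < k. Let t be a nonnegative integer, let x, u be nonnegative integers, and let S ⊆ A satisfy |S| = xq + u, where 0 ≤ u ≤ x and u ≤ r. Put M := 𝔞 − |S| and H := min{ q, ⌊(𝔟 − t(q+1)) / (Δ − 1)⌋ }. If r − u ≤ k − x, t ≤ k − x, H ≥ 0, and t·H ≥ M, then V(G) can be partitioned into k pairwise disjoint independent sets, exactly r of which have size q + 1 and the remaining k − r of which have size q. -/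
/-!
Only the numbers of vertices of `A` and of `B` in each colour class have to be chosen. Let `r` of
the classes have size `q + 1` and the others size `q`, in such a way that some `x` colours, `u` of
them with large classes, account for `x * q + u` vertices; these colours use vertices of `A` only.
The remaining at most `t * H` vertices of `A` are spread over `t` further colours, at most `H` in
each, and `B` fills up all the classes. The `t` mixed colours receive their vertices of `B` first,
greedily: a mixed class with `a ≤ H` vertices of `A` has at most `D * a` forbidden vertices in `B`,
while the mixed classes need at most `t * (q + 1) - a` vertices of `B` altogether, so
`(D - 1) * H ≤ |B| - t * (q + 1)` leaves enough room.
-/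

section Allotment

open Finset

variable {α ι : Type*}

/-- `P` allots to every index `i ∈ I` a set of `d i` elements of `X` which avoids the forbidden set
`N i`, different indices receiving disjoint sets. The values of `P` outside `I` are irrelevant, so
that an allotment can be built up one index at a time. -/
structure IsAllotment (X : Finset α) (N : ι → Finset α) (d : ι → ℕ) (I : Finset ι)
    (P : ι → Finset α) : Prop where
  subset : ∀ i ∈ I, P i ⊆ X
  card_eq : ∀ i ∈ I, #(P i) = d i
  disjoint_forbidden : ∀ i ∈ I, Disjoint (P i) (N i)
  pairwiseDisjoint : (I : Set ι).PairwiseDisjoint P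

namespace IsAllotment

variable {X : Finset α} {N : ι → Finset α} {d : ι → ℕ} {I : Finset ι} {P : ι → Finset α}

theorem card_biUnion [DecidableEq α] (hP : IsAllotment X N d I P) :
    #(I.biUnion P) = ∑ i ∈ I, d i := by
  rw [Finset.card_biUnion hP.pairwiseDisjoint, sum_congr rfl hP.card_eq]

theorem biUnion_eq [DecidableEq α] (hP : IsAllotment X N d I P) (hX : ∑ i ∈ I, d i = #X) :
    I.biUnion P = X :=
  eq_of_subset_of_card_le (biUnion_subset.2 hP.subset) (by rw [hP.card_biUnion, hX])

variable [DecidableEq ι]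

theorem insert_update [DecidableEq α] (hP : IsAllotment X N d I P) {a : ι} (ha : a ∉ I)
    {Q : Finset α} (hQ : Q ⊆ X \ (I.biUnion P ∪ N a)) (hQd : #Q = d a) :
    IsAllotment X N d (insert a I) (Function.update P a Q) := by
  obtain ⟨hQX, hQP, hQN⟩ : Q ⊆ X ∧ Disjoint Q (I.biUnion P) ∧ Disjoint Q (N a) := by
    rwa [subset_sdiff, disjoint_union_right] at hQ
  have hupd : ∀ i ∈ I, Function.update P a Q i = P i := fun i hi =>
    Function.update_of_ne (ne_of_mem_of_not_mem hi ha) ..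
  refine ⟨?_, ?_, ?_, ?_⟩
  · simpa +contextual [forall_mem_insert, hupd] using ⟨hQX, hP.subset⟩
  · simpa +contextual [forall_mem_insert, hupd] using ⟨hQd, hP.card_eq⟩
  · simpa +contextual [forall_mem_insert, hupd] using ⟨hQN, hP.disjoint_forbidden⟩
  · rw [coe_insert, Set.pairwiseDisjoint_insert_of_notMem (mem_coe.not.2 ha)]
    refine ⟨fun i hi j hj hij => ?_, fun i hi => ?_⟩
    · simpa only [Function.onFun, hupd i hi, hupd j hj] using hP.pairwiseDisjoint hi hj hij
    · simpa only [Function.update_self, hupd i hi] using (disjoint_biUnion_right ..).1 hQP i hi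

theorem exists_insert (hP : IsAllotment X N d I P) {a : ι} (ha : a ∉ I)
    (h : d a ≠ 0 → d a + ∑ i ∈ I, d i + #(N a) ≤ #X) :
    ∃ Q, IsAllotment X N d (insert a I) Q := by
  classical
  have hroom : d a ≤ #(X \ (I.biUnion P ∪ N a)) := by
    have h_sdiff := le_card_sdiff (I.biUnion P ∪ N a) X
    have h_union := card_union_le (I.biUnion P) (N a)
    rw [hP.card_biUnion] at h_union
    omega
  obtain ⟨Q, hQ, hQd⟩ := exists_subset_card_eq hroom
  exact ⟨_, hP.insert_update ha hQ hQd⟩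

theorem exists_union (hP : IsAllotment X N d I P) {J : Finset ι}
    (h : ∀ a ∈ J, d a ≠ 0 → ∑ i ∈ I ∪ J, d i + #(N a) ≤ #X) :
    ∃ Q, IsAllotment X N d (I ∪ J) Q := by
  induction J using Finset.induction_on with
  | empty => exact ⟨P, by rwa [union_empty]⟩
  | insert a J _ ih =>
    rw [union_insert] at h ⊢
    obtain ⟨Q, hQ⟩ := ih fun i hi hdi => le_trans
      (by gcongr; exact subset_insert _ _) (h i (mem_insert_of_mem hi) hdi)
    by_cases ha : a ∈ I ∪ J
    · exact ⟨Q, by rwa [insert_eq_of_mem ha]⟩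
    · refine hQ.exists_insert ha fun hda => ?_
      rw [← sum_insert ha]
      exact h a (mem_insert_self a J) hda

end IsAllotment

/-- The greedy choice serves the indices of `T` first; each other index demands nothing or has
nothing to avoid. -/
theorem exists_isAllotment_univ [Fintype ι] {X : Finset α}
    {N : ι → Finset α} {d : ι → ℕ} (hd : ∑ i, d i ≤ #X) (T : Finset ι)
    (hT : ∀ i ∈ T, ∑ j ∈ T, d j + #(N i) ≤ #X) (hTc : ∀ i ∉ T, d i = 0 ∨ N i = ∅) :
    ∃ P, IsAllotment X N d univ P := by
  classical
  have h_empty : IsAllotment X N d ∅ fun _ => ∅ := ⟨by simp, by simp, by simp, by simp⟩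
  obtain ⟨Q, hQ⟩ := h_empty.exists_union (J := T) fun i hi _ => by
    rw [empty_union]
    exact hT i hi
  rw [empty_union] at hQ
  rw [← union_compl T]
  refine hQ.exists_union fun i hi hdi => ?_
  rw [union_compl, (hTc i (mem_compl.1 hi)).resolve_left hdi, card_empty, add_zero]
  exact hd

end Allotment

section ClassSizes

open Finset

variable {ι : Type*}

theorem exists_le_sum_eq {f : ι → ℕ} {T : Finset ι} {m : ℕ} (hm : m ≤ ∑ i ∈ T, f i) :
    ∃ g ≤ f, (∀ i ∉ T, g i = 0) ∧ ∑ i ∈ T, g i = m := by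
  classical
  induction T using Finset.induction_on generalizing m with
  | empty => exact ⟨0, zero_le, fun _ _ => rfl, by simpa [eq_comm] using hm⟩
  | insert a T ha ih =>
    rw [sum_insert ha] at hm
    obtain ⟨g, hgf, hg0, hgm⟩ := ih (m := m - min m (f a)) (by omega)
    refine ⟨Function.update g a (min m (f a)), ?_, fun i hi => ?_, ?_⟩
    · exact update_le_iff.2 ⟨min_le_right _ _, fun i _ => hgf i⟩
    · rw [mem_insert, not_or] at hi
      rw [Function.update_of_ne hi.1, hg0 i hi.2]
    · rw [sum_insert ha, sum_update_of_notMem ha, Function.update_self, hgm]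
      omega

variable [DecidableEq ι]

/-- The size of the colour class `i` in an equitable colouring with classes of size `q` and `q + 1`,
where `L` is the set of colours of the large classes. -/
def classSize (q : ℕ) (L : Finset ι) (i : ι) : ℕ := q + if i ∈ L then 1 else 0

theorem le_classSize (q : ℕ) (L : Finset ι) (i : ι) : q ≤ classSize q L i :=
  Nat.le_add_right ..

theorem classSize_eq_or (q : ℕ) (L : Finset ι) (i : ι) :
    classSize q L i = q ∨ classSize q L i = q + 1 := by
  grind [classSize]

theorem classSize_eq_succ_iff {q : ℕ} {L : Finset ι} {i : ι} :
    classSize q L i = q + 1 ↔ i ∈ L := by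
  grind [classSize]

theorem sum_classSize (q : ℕ) (L I : Finset ι) :
    ∑ i ∈ I, classSize q L i = #I * q + #(I ∩ L) := by
  simp only [classSize, sum_add_distrib, sum_const, smul_eq_mul, sum_boole, filter_mem_eq_inter,
    Nat.cast_id]

theorem exists_disjoint_card_eq_card_inter_eq [Fintype ι] {x t r u : ℕ} (hux : u ≤ x) (hur : u ≤ r)
    (hru : r + x ≤ Fintype.card ι + u) (htx : t + x ≤ Fintype.card ι) :
    ∃ X T L : Finset ι, Disjoint X T ∧ #X = x ∧ #T = t ∧ #L = r ∧ #(X ∩ L) = u := by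
  obtain ⟨X, -, hX⟩ := exists_subset_card_eq (s := (univ : Finset ι)) (n := x)
    (by rw [card_univ]; omega)
  have hXc : #Xᶜ = Fintype.card ι - x := by rw [card_compl, hX]
  obtain ⟨T, hT, hTt⟩ := exists_subset_card_eq (s := Xᶜ) (n := t) (by omega)
  obtain ⟨U, hU, hUu⟩ := exists_subset_card_eq (hux.trans hX.ge)
  obtain ⟨W, hW, hWw⟩ := exists_subset_card_eq (s := Xᶜ) (n := r - u) (by omega)
  have hXW : Disjoint X W := (subset_compl_iff_disjoint_left ..).1 hW
  refine ⟨X, T, U ∪ W, (subset_compl_iff_disjoint_left ..).1 hT, hX, hTt, ?_, ?_⟩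
  · rw [card_union_of_disjoint (hXW.mono_left hU), hUu, hWw]
    omega
  · rw [inter_union_distrib_left, disjoint_iff_inter_eq_empty.1 hXW, union_empty,
      inter_eq_right.2 hU, hUu]

theorem exists_add_eq_classSize [Fintype ι] {q H m : ℕ} (L : Finset ι) {X T : Finset ι}
    (hXT : Disjoint X T) (hHq : H ≤ q) (hm : m ≤ #T * H) :
    ∃ a b : ι → ℕ, (∀ i, a i + b i = classSize q L i) ∧
      ∑ i, a i = ∑ i ∈ X, classSize q L i + m ∧ (∀ i ∈ T, a i ≤ H) ∧
      ∀ i ∉ T, a i = 0 ∨ b i = 0 := by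
  obtain ⟨h, hhH, hh0, hhm⟩ := exists_le_sum_eq (f := fun _ => H) (T := T) (m := m) (by simpa)
  let a : ι → ℕ := fun i => (if i ∈ X then classSize q L i else 0) + h i
  have ha_mem : ∀ i ∈ X, a i = classSize q L i := fun i hi => by
    simp only [a, if_pos hi, hh0 i (disjoint_left.1 hXT hi), add_zero]
  have ha_notMem : ∀ i ∉ X, a i = h i := fun i hi => by simp only [a, if_neg hi, zero_add]
  have ha_le : ∀ i, a i ≤ classSize q L i := fun i => by
    by_cases hi : i ∈ X
    · exact (ha_mem i hi).le
    · exact (ha_notMem i hi).trans_le ((hhH i).trans (hHq.trans (le_classSize q L i)))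
  refine ⟨a, fun i => classSize q L i - a i, fun i => Nat.add_sub_cancel' (ha_le i), ?_,
    fun i hi => (ha_notMem i (disjoint_right.1 hXT hi)).trans_le (hhH i), fun i hi => ?_⟩
  · rw [sum_add_distrib, sum_ite_mem, univ_inter, ← hhm,
      sum_subset (subset_univ T) fun i _ hi => hh0 i hi]
  · by_cases hiX : i ∈ X
    · exact .inr (Nat.sub_eq_zero_of_le (ha_mem i hiX).ge)
    · exact .inl ((ha_notMem i hiX).trans (hh0 i hi))

theorem sum_add_mul_le_of_add_eq_classSize {D q H n : ℕ} (hD : 1 ≤ D) {L T : Finset ι}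
    {a b : ι → ℕ} (hab : ∀ i ∈ T, a i + b i = classSize q L i) (haH : ∀ i ∈ T, a i ≤ H)
    (hn : (H : ℤ) * (D - 1) ≤ n - #T * (q + 1)) {i : ι} (hi : i ∈ T) :
    ∑ j ∈ T, b j + a i * D ≤ n := by
  have h_sum : ∑ j ∈ T, a j + ∑ j ∈ T, b j ≤ #T * (q + 1) := by
    rw [← sum_add_distrib, sum_congr rfl hab, sum_classSize, mul_add, mul_one]
    gcongr
    exact inter_subset_left
  have h_single : a i ≤ ∑ j ∈ T, a j := single_le_sum (fun _ _ => Nat.zero_le _) hi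
  have h_mul : (a i : ℤ) * (D - 1) ≤ H * (D - 1) := by
    gcongr
    · omega
    · exact haH i hi
  zify at h_sum h_single ⊢
  linarith

end ClassSizes

section Bipartite

open Finset

variable {V ι : Type*} [DecidableEq V] [Fintype ι]

theorem exists_independent_partition (G : SimpleGraph V) [G.LocallyFinite] {A B : Finset V}
    (hdisj : Disjoint A B) (hAind : ∀ v ∈ A, ∀ w ∈ A, ¬ G.Adj v w)
    (hBind : ∀ v ∈ B, ∀ w ∈ B, ¬ G.Adj v w) {D : ℕ} (hdeg : ∀ v ∈ A, G.degree v ≤ D)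
    {a b : ι → ℕ} (ha : ∑ i, a i = #A) (hb : ∑ i, b i = #B) (T : Finset ι)
    (hT : ∀ i ∈ T, ∑ j ∈ T, b j + a i * D ≤ #B) (hTc : ∀ i ∉ T, a i = 0 ∨ b i = 0) :
    ∃ P : ι → Finset V, (∀ i j, i ≠ j → Disjoint (P i) (P j)) ∧ univ.biUnion P = A ∪ B ∧
      (∀ i, ∀ v ∈ P i, ∀ w ∈ P i, ¬ G.Adj v w) ∧ ∀ i, #(P i) = a i + b i := by
  obtain ⟨Q, hQ⟩ := exists_isAllotment_univ (N := fun _ => ∅) ha.le ∅ (by simp) (by simp)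
  have hQA : ∀ i, Q i ⊆ A := fun i => hQ.subset i (mem_univ i)
  have hN : ∀ i, #((Q i).biUnion fun v => G.neighborFinset v) ≤ a i * D := fun i => by
    rw [← hQ.card_eq i (mem_univ i)]
    exact card_biUnion_le_card_mul _ _ _ fun v hv => hdeg v (hQA i hv)
  obtain ⟨R, hR⟩ := exists_isAllotment_univ
    (N := fun i => (Q i).biUnion fun v => G.neighborFinset v) hb.le T
    (fun i hi => (Nat.add_le_add_left (hN i) _).trans (hT i hi))
    fun i hi => (hTc i hi).symm.imp_right fun hai => by
      rw [card_eq_zero.1 ((hQ.card_eq i (mem_univ i)).trans hai), biUnion_empty]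
  have hRB : ∀ i, R i ⊆ B := fun i => hR.subset i (mem_univ i)
  have hQR : ∀ i j, Disjoint (Q i) (R j) := fun i j => hdisj.mono (hQA i) (hRB j)
  have hQR_adj : ∀ i, ∀ v ∈ Q i, ∀ w ∈ R i, ¬ G.Adj v w := fun i v hv w hw hadj =>
    disjoint_left.1 (hR.disjoint_forbidden i (mem_univ i)) hw
      (mem_biUnion.2 ⟨v, hv, (G.mem_neighborFinset v w).2 hadj⟩)
  refine ⟨fun i => Q i ∪ R i, fun i j hij => ?_, ?_, fun i v hv w hw => ?_, fun i => ?_⟩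
  · simp only [disjoint_union_left, disjoint_union_right]
    exact ⟨⟨hQ.pairwiseDisjoint (by simp) (by simp) hij, (hQR j i).symm⟩,
      hQR i j, hR.pairwiseDisjoint (by simp) (by simp) hij⟩
  · rw [biUnion_union, hQ.biUnion_eq ha, hR.biUnion_eq hb]
  · rcases mem_union.1 hv with hv | hv <;> rcases mem_union.1 hw with hw | hw
    · exact hAind v (hQA i hv) w (hQA i hw)
    · exact hQR_adj i v hv w hw
    · exact fun hadj => hQR_adj i w hw v hv hadj.symm
    · exact hBind v (hRB i hv) w (hRB i hw)
  · rw [card_union_of_disjoint (hQR i i), hQ.card_eq i (mem_univ i), hR.card_eq i (mem_univ i)]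

end Bipartite

open Finset in
theorem construction_lemma_general {V : Type*} [Fintype V] [DecidableEq V]
    (G : SimpleGraph V) [DecidableRel G.Adj]
    (A B : Finset V)
    (hcover : A ∪ B = Finset.univ) (hdisj : Disjoint A B)
    (hAind : ∀ u ∈ A, ∀ v ∈ A, ¬ G.Adj u v)
    (hBind : ∀ u ∈ B, ∀ v ∈ B, ¬ G.Adj u v)
    (D : ℕ) (hD : 1 ≤ D) (hdeg : ∀ v ∈ A, G.degree v ≤ D)
    (k q r : ℕ) (hn : Fintype.card V = k * q + r)
    (t x u : ℕ) (hux : u ≤ x) (hur : u ≤ r) (hru : r + x ≤ k + u) (htk : t + x ≤ k)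
    (H : ℕ) (hHq : H ≤ q) (hHB : (H : ℤ) * (D - 1) ≤ #B - t * (q + 1))
    (hxA : x * q + u ≤ #A) (hAx : #A ≤ x * q + u + t * H) :
    ∃ P : Fin k → Finset V,
      (∀ i j, i ≠ j → Disjoint (P i) (P j)) ∧
      Finset.univ.biUnion P = Finset.univ ∧
      (∀ i, ∀ v ∈ P i, ∀ w ∈ P i, ¬ G.Adj v w) ∧
      (Finset.univ.filter fun i => (P i).card = q + 1).card = r ∧
      (∀ i, (P i).card = q ∨ (P i).card = q + 1) := by
  obtain ⟨X, T, L, hXT, rfl, rfl, rfl, hXL⟩ := exists_disjoint_card_eq_card_inter_eq (ι := Fin k)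
    hux hur (by rwa [Fintype.card_fin]) (t := t) (by rwa [Fintype.card_fin])
  obtain ⟨a, b, hab, ha_sum, haH, hab0⟩ :=
    exists_add_eq_classSize L hXT hHq (Nat.sub_le_iff_le_add'.2 hAx)
  have ha : ∑ i, a i = #A := by rw [ha_sum, sum_classSize, hXL, Nat.add_sub_cancel' hxA]
  have hb : ∑ i, b i = #B := by
    have hAB : #A + #B = k * q + #L := by
      rw [← card_union_of_disjoint hdisj, hcover, card_univ, hn]
    have h_total : ∑ i, a i + ∑ i, b i = k * q + #L := by
      rw [← sum_add_distrib, sum_congr rfl fun i _ => hab i, sum_classSize, card_fin, univ_inter]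
    omega
  obtain ⟨P, hP_disj, hP_cover, hP_ind, hP_card⟩ := exists_independent_partition G hdisj hAind hBind
    hdeg ha hb T
    (fun i hi => sum_add_mul_le_of_add_eq_classSize hD (fun j _ => hab j) haH hHB hi) hab0
  replace hP_card : ∀ i, #(P i) = classSize q L i := fun i => (hP_card i).trans (hab i)
  refine ⟨P, hP_disj, hP_cover.trans hcover, hP_ind, ?_, fun i => ?_⟩
  · simp only [hP_card, classSize_eq_succ_iff, filter_univ_mem]
  · rw [hP_card]
    exact classSize_eq_or q L i

theorem construction_lemma {V : Type} [Fintype V] [DecidableEq V]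
    (G : SimpleGraph V) [DecidableRel G.Adj]
    (A B : Finset V)
    (hcover : A ∪ B = Finset.univ) (hdisj : Disjoint A B)
    (hAind : ∀ u ∈ A, ∀ v ∈ A, ¬ G.Adj u v)
    (hBind : ∀ u ∈ B, ∀ v ∈ B, ¬ G.Adj u v)
    (hab : A.card ≤ B.card)
    (hΔ : 2 ≤ G.maxDegree)
    (k q r : ℕ) (hk : k = (G.maxDegree + 1) / 2 + 1)
    (hq : 1 ≤ q) (hr : r < k) (hn : Fintype.card V = k * q + r)
    (t x u : ℕ) (S : Finset V) (hSA : S ⊆ A) (hScard : S.card = x * q + u)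
    (hux : u ≤ x) (hur : u ≤ r)
    (M : ℕ) (hM : M = A.card - S.card)
    (H : ℤ)
    (hH : H = min (q : ℤ) (((B.card : ℤ) - t * (q + 1)) / ((G.maxDegree : ℤ) - 1)))
    (hru : (r : ℤ) - u ≤ (k : ℤ) - x) (htk : (t : ℤ) ≤ (k : ℤ) - x)
    (hH0 : 0 ≤ H) (htH : (M : ℤ) ≤ t * H) :
    ∃ P : Fin k → Finset V,
      (∀ i j, i ≠ j → Disjoint (P i) (P j)) ∧
      Finset.univ.biUnion P = Finset.univ ∧
      (∀ i, ∀ v ∈ P i, ∀ w ∈ P i, ¬ G.Adj v w) ∧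
      (Finset.univ.filter fun i => (P i).card = q + 1).card = r ∧
      (∀ i, (P i).card = q ∨ (P i).card = q + 1) := by
  lift H to ℕ using hH0
  exact construction_lemma_general G A B hcover hdisj hAind hBind G.maxDegree (by omega)
    (fun v _ => G.degree_le_maxDegree v) k q r hn t x u hux hur (by omega) (by omega) H
    (by exact_mod_cast hH.le.trans (min_le_left _ _))
    ((Int.le_ediv_iff_mul_le (by omega)).1 (hH.le.trans (min_le_right _ _)))
    (hScard ▸ Finset.card_le_card hSA)
    (by rw [← hScard, ← Nat.sub_le_iff_le_add', ← hM]; exact_mod_cast htH)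
end

section
/- Let q ≥ 1, k ≥ 1, and r be integers with 0 ≤ r < k, and let a be an integer with 0 ≤ a ≤ (kq + r)/2. Then there exist integers x, u, M such that a = xq + u + M, 0 ≤ u ≤ x ≤ ⌊k/2⌋, u ≤ r, r − u ≤ k − x, and 0 ≤ M < q + k. -/
/-!
Divide `a` by `q + 1`: if `a = x * (q + 1) + s` with `0 ≤ s ≤ q`, then `a = x * q + x + s`. Put
`u = min x r` and let the rest `x - u` of the middle term go into `M = s + (x - u)`; the condition
`r - u ≤ k - x` then reads `max x r ≤ k`. The bound `x ≤ k / 2` comes for free from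
`2 * a ≤ k * q + r ≤ k * (q + 1)`, and it gives `M ≤ q + x < q + k`.
-/

theorem int_ediv_le_ediv_of_mul_le_mul {a b c d : ℤ} (hb : 0 < b) (hd : 0 < d)
    (h : a * d ≤ c * b) : a / b ≤ c / d := by
  rw [Int.le_ediv_iff_mul_le hd]
  refine le_of_mul_le_mul_right ?_ hb
  calc a / b * d * b = a / b * b * d := mul_right_comm _ _ _
    _ ≤ a * d := mul_le_mul_of_nonneg_right (Int.ediv_mul_le a hb.ne') hd.le
    _ ≤ c * b := h

theorem normalization_lemma (q k r a : ℤ) (hq : 1 ≤ q) (hk : 1 ≤ k)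
    (hr0 : 0 ≤ r) (hrk : r < k) (ha0 : 0 ≤ a) (ha : 2 * a ≤ k * q + r) :
    ∃ x u M : ℤ, a = x * q + u + M ∧
      0 ≤ u ∧ u ≤ x ∧ x ≤ k / 2 ∧ u ≤ r ∧ r - u ≤ k - x ∧
      0 ≤ M ∧ M < q + k := by
  have hq₁ : 0 < q + 1 := by linarith
  set x := a / (q + 1)
  set s := a % (q + 1)
  have hdiv : x * (q + 1) + s = a := Int.ediv_mul_add_emod a (q + 1)
  have hs0 : 0 ≤ s := Int.emod_nonneg a hq₁.ne'
  have hsq : s < q + 1 := Int.emod_lt_of_pos a hq₁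
  have hx0 : 0 ≤ x := Int.ediv_nonneg ha0 hq₁.le
  have hxk : x ≤ k / 2 := int_ediv_le_ediv_of_mul_le_mul hq₁ two_pos (by linarith)
  have hux : min x r ≤ x := min_le_left x r
  have hu0 : 0 ≤ min x r := le_min hx0 hr0
  have hmax : max x r ≤ k := max_le (by omega) hrk.le
  refine ⟨x, min x r, s + (x - min x r), by linarith, hu0, hux, hxk, min_le_right x r, ?_, ?_, ?_⟩
  · linarith [min_add_max x r]
  · linarith
  · omega
end

section
/- Let n, k, Δ, b be integers with k ≥ 37, Δ ≥ 2, Δ − 1 ≤ 2k, 2b ≥ n, and n(k − 36) ≥ 41k² − 36k. Set q := ⌊n/k⌋ and t := ⌊k/4⌋. Then ⌊k/4⌋ · ⌊(b − t(q + 1)) / (Δ − 1)⌋ ≥ q + k. -/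
/-!
Write `L` for the floor `⌊(b - t(q + 1)) / (Δ - 1)⌋`. Since `4t(q + 1) ≤ k(q + 1) ≤ n + k` and
`2n ≤ 4b`, we have `n - k ≤ 4(b - t(q + 1))`, and dividing by `Δ - 1 ≤ 2k` costs less than `1` in
the floor, so `n - 9k ≤ 8kL`. Multiplying by `k - 4 ≤ 4t` gives `(k - 4)(n - 9k) ≤ 32k(tL)`, and the
hypothesis on `n` is precisely `32(n + k²) ≤ (k - 4)(n - 9k)`. Hence `n + k² ≤ k(tL)`, and dividing
by `k` gives `q + k ≤ tL`.
-/

theorem mul_lt_of_mul_sq_sub_mul_le {R : Type*} [CommRing R] [LinearOrder R]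
    [IsStrictOrderedRing R] {a c k n : R} (ha : 1 < a) (hc : 0 < c) (hck : c < k)
    (h : a * k ^ 2 - c * k ≤ n * (k - c)) : a * k < n := by
  have hgap : 0 < (a - 1) * (c * k) := mul_pos (sub_pos.2 ha) (mul_pos hc (hc.trans hck))
  have hprod : 0 < (n - a * k) * (k - c) := by linear_combination hgap + h
  exact sub_pos.1 (pos_of_mul_pos_left hprod (sub_pos.2 hck).le)

theorem int_lt_ediv_add_one_mul_of_le {x d m : ℤ} (hx : 0 ≤ x) (hd : 0 < d) (hdm : d ≤ m) :
    x < (x / d + 1) * m :=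
  calc
    x < (x / d + 1) * d := Int.lt_ediv_add_one_mul_self x hd
    _ ≤ (x / d + 1) * m :=
      mul_le_mul_of_nonneg_left hdm (add_nonneg (Int.ediv_nonneg hx hd.le) zero_le_one)

theorem int_sub_le_mul_sub_ediv_mul_ediv_add_one {b c k n : ℤ} (hc : c ≠ 0) (hk : 0 < k)
    (hn : 0 ≤ n) (hb : 2 * n ≤ c * b) : n - k ≤ c * (b - k / c * (n / k + 1)) := by
  have hq : 0 ≤ n / k + 1 := add_nonneg (Int.ediv_nonneg hn hk.le) zero_le_one
  have hremoved : c * (k / c) * (n / k + 1) ≤ n + k :=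
    calc
      c * (k / c) * (n / k + 1) ≤ k * (n / k + 1) :=
        mul_le_mul_of_nonneg_right (Int.mul_ediv_self_le hc) hq
      _ = k * (n / k) + k := mul_add_one _ _
      _ ≤ n + k := by gcongr; exact Int.mul_ediv_self_le hk.ne'
  linear_combination hb + hremoved

theorem int_ediv_add_le_of_add_mul_self_le {k m n : ℤ} (hk : 0 < k)
    (h : n + k * k ≤ m * k) : n / k + k ≤ m :=
  calc
    n / k + k = (n + k * k) / k := (Int.add_mul_ediv_right n k hk.ne').symm
    _ ≤ m := Int.ediv_le_of_le_mul hk h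

theorem tL_ge_M_bound (n k Δ b q t : ℤ) (hk37 : 37 ≤ k) (hΔ2 : 2 ≤ Δ)
    (hΔk : Δ - 1 ≤ 2 * k) (hb : 2 * b ≥ n)
    (hnk : n * (k - 36) ≥ 41 * k ^ 2 - 36 * k)
    (hq : q = n / k) (ht : t = k / 4) :
    t * ((b - t * (q + 1)) / (Δ - 1)) ≥ q + k := by
  have hn : 41 * k < n :=
    mul_lt_of_mul_sq_sub_mul_le (by norm_num) (by norm_num) (by linarith) hnk
  have hx : n - k ≤ 4 * (b - t * (q + 1)) := by
    rw [hq, ht]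
    exact int_sub_le_mul_sub_ediv_mul_ediv_add_one (by norm_num) (by linarith) (by linarith)
      (by linarith)
  set L := (b - t * (q + 1)) / (Δ - 1)
  have hL : n - 9 * k ≤ 8 * k * L := by
    have hlt : b - t * (q + 1) < (L + 1) * (2 * k) :=
      int_lt_ediv_add_one_mul_of_le (by linarith) (by linarith) hΔk
    linarith
  have ht4 : k - 4 ≤ 4 * t := by lia
  have hprod : 32 * (n + k * k) ≤ 32 * (t * L * k) :=
    calc
      32 * (n + k * k) ≤ (k - 4) * (n - 9 * k) := by linear_combination hnk
      _ ≤ 4 * t * (8 * k * L) := mul_le_mul ht4 hL (by linarith) (by linarith)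
      _ = 32 * (t * L * k) := by ring
  rw [hq]
  exact int_ediv_add_le_of_add_mul_self_le (by linarith) (by linarith)
end
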